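/- For B ∈ 𝔰𝔬(n,ℤ) define f_B(τ, m) := (c ↦ τ(c) − ⟨m|B|c⟩, m) and η_B(a,a') := (the constant map 𝕋ⁿ → 𝕋 with value ⌊a'|B|a⌋ mod ℤ, 0). Then for every map τ: 𝕋ⁿ → 𝕋 (in particular every smooth map), all m, m' ∈ ℤⁿ, a, a', a'' ∈ ℝⁿ and every c ∈ 𝕋ⁿ, the crossed intertwiner axioms for F_B = (id_{ℝⁿ}, f_B, η_B): TBFFR[n] → TBFFR[n] hold pointwise: (CI2) ⌊m'|B|m⌋ ≡ 0 mod ℤ; (CI4) η_B(a, m−a) + f_B(α(a,(τ,m))) = η_B(m−a, a) + α(a, f_B(τ,m)) evaluated at c; (CI5) η_B(a,a') + η_B(a+a', a'') = η_B(a',a'') + η_B(a, a'+a''). Moreover, for B₁, B₂ ∈ 𝔰𝔬(n,ℤ): f_{B₂}(f_{B₁}(τ,m)) = f_{B₁+B₂}(τ,m) and η_{B₂} + η_{B₁} = η_{B₁+B₂}, so F_{B₂} ∘ F_{B₁} = F_{B₁+B₂} and B ↦ F_B is an action of 𝔰𝔬(n,ℤ) on TBFFR[n] by crossed intertwiners.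 -/

import Mathlib

open Matrix

noncomputable section

/-- The additive circle `𝕋 := ℝ/ℤ`. -/
abbrev Torus : Type := AddCircle (1 : ℝ)

/-- Elements of `H` of `TBFFR[n]`: pairs of a map `τ : 𝕋ⁿ → 𝕋` and `m ∈ ℤⁿ`. -/
abbrev TBH (n : ℕ) : Type := ((Fin n → Torus) → Torus) × (Fin n → ℤ)

/-- `t(τ, m) := m ∈ ℝⁿ`. -/
def TBt {n : ℕ} (h : TBH n) : Fin n → ℝ := fun i => (h.2 i : ℝ)

/-- Action of `ℝⁿ` on `H`: `α(g,(τ,m)) := (c ↦ τ(c − g), m)`, with `g` acting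
on `𝕋ⁿ` via the projection `ℝⁿ → 𝕋ⁿ`. -/
def TBα {n : ℕ} (g : Fin n → ℝ) (h : TBH n) : TBH n :=
  (fun c => h.1 (c - fun i => ((g i : ℝ) : Torus)), h.2)

/-- `⌊v|B|w⌋ := Σ_{i>j} B_{ij} vᵢ wⱼ`. -/
def lbrak {n : ℕ} (B : Matrix (Fin n) (Fin n) ℤ) (v w : Fin n → ℝ) : ℝ :=
  ∑ i, ∑ j, if j < i then (B i j : ℝ) * v i * w j else 0

/-- The well-defined map `⟨m|B|·⟩ : 𝕋ⁿ → 𝕋`, `c ↦ Σ_{i,j} B_{ij} mᵢ cⱼ`. -/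
def braB {n : ℕ} (B : Matrix (Fin n) (Fin n) ℤ) (m : Fin n → ℤ) (c : Fin n → Torus) : Torus :=
  ∑ i, ∑ j, (B i j * m i) • c j

/-- `f_B(τ, m) := (c ↦ τ(c) − ⟨m|B|c⟩, m)`. -/
def fB {n : ℕ} (B : Matrix (Fin n) (Fin n) ℤ) (h : TBH n) : TBH n :=
  (fun c => h.1 c - braB B h.2 c, h.2)

/-- `η_B(a,a') := (the constant map with value ⌊a'|B|a⌋ mod ℤ, 0)`. -/
def ηB {n : ℕ} (B : Matrix (Fin n) (Fin n) ℤ) (a a' : Fin n → ℝ) : TBH n :=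
  (fun _ => ((lbrak B a' a : ℝ) : Torus), 0)

theorem lbrak_add_left {n : ℕ} (B : Matrix (Fin n) (Fin n) ℤ) (u v w : Fin n → ℝ) :
    lbrak B (u + v) w = lbrak B u w + lbrak B v w := by
  unfold lbrak
  simp only [← Finset.sum_add_distrib]
  refine Finset.sum_congr rfl fun i _ => Finset.sum_congr rfl fun j _ => ?_
  simp only [Pi.add_apply]
  split_ifs <;> ring

theorem lbrak_add_right {n : ℕ} (B : Matrix (Fin n) (Fin n) ℤ) (u v w : Fin n → ℝ) :
    lbrak B u (v + w) = lbrak B u v + lbrak B u w := by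
  unfold lbrak
  simp only [← Finset.sum_add_distrib]
  refine Finset.sum_congr rfl fun i _ => Finset.sum_congr rfl fun j _ => ?_
  simp only [Pi.add_apply]
  split_ifs <;> ring

theorem lbrak_add_matrix {n : ℕ} (B C : Matrix (Fin n) (Fin n) ℤ) (v w : Fin n → ℝ) :
    lbrak (B + C) v w = lbrak B v w + lbrak C v w := by
  unfold lbrak
  simp only [← Finset.sum_add_distrib]
  refine Finset.sum_congr rfl fun i _ => Finset.sum_congr rfl fun j _ => ?_
  simp only [Matrix.add_apply]
  split_ifs <;> push_cast <;> ring

theorem lbrak_int {n : ℕ} (B : Matrix (Fin n) (Fin n) ℤ) (m m' : Fin n → ℤ) :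
    ((lbrak B (fun i => (m i : ℝ)) (fun i => (m' i : ℝ)) : ℝ) : Torus) = 0 := by
  rw [AddCircle.coe_eq_zero_iff]
  refine ⟨∑ i, ∑ j, if j < i then B i j * m i * m' j else 0, ?_⟩
  unfold lbrak
  simp

theorem braB_sub {n : ℕ} (B : Matrix (Fin n) (Fin n) ℤ) (m : Fin n → ℤ) (c d : Fin n → Torus) :
    braB B m (c - d) = braB B m c - braB B m d := by
  unfold braB
  simp only [← Finset.sum_sub_distrib, Pi.sub_apply, smul_sub]

theorem braB_add_matrix {n : ℕ} (B C : Matrix (Fin n) (Fin n) ℤ) (m : Fin n → ℤ)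
    (c : Fin n → Torus) : braB (B + C) m c = braB B m c + braB C m c := by
  unfold braB
  simp only [← Finset.sum_add_distrib, Matrix.add_apply, add_mul, add_smul]

theorem braB_coe {n : ℕ} (B : Matrix (Fin n) (Fin n) ℤ) (m : Fin n → ℤ) (a : Fin n → ℝ) :
    braB B m (fun i => ((a i : ℝ) : Torus)) =
      ((∑ i, ∑ j, (B i j : ℝ) * (m i : ℝ) * a j : ℝ) : Torus) := by
  have h : ∀ s : Finset (Fin n), ∀ f : Fin n → ℝ,
      ((∑ i ∈ s, f i : ℝ) : Torus) = ∑ i ∈ s, ((f i : ℝ) : Torus) := fun s f =>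
    map_sum (QuotientAddGroup.mk' (AddSubgroup.zmultiples (1 : ℝ))) f s
  unfold braB
  simp only [h]
  refine Finset.sum_congr rfl fun i _ => Finset.sum_congr rfl fun j _ => ?_
  rw [← AddCircle.coe_zsmul, zsmul_eq_mul]
  push_cast
  rfl

theorem lbrak_skew {n : ℕ} (B : Matrix (Fin n) (Fin n) ℤ) (hB : Bᵀ = -B) (v w : Fin n → ℝ) :
    lbrak B v w = lbrak B w v + ∑ i, ∑ j, (B i j : ℝ) * v i * w j := by
  have hs : ∀ i j, (B j i : ℝ) = -(B i j : ℝ) := fun i j => by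
    have h := congrFun (congrFun hB i) j
    simp only [Matrix.transpose_apply, Matrix.neg_apply] at h
    rw [h]; push_cast; rfl
  have h2 : lbrak B w v = ∑ i, ∑ j, if i < j then (B j i : ℝ) * w j * v i else 0 := by
    unfold lbrak
    rw [Finset.sum_comm]
  rw [h2]
  unfold lbrak
  simp only [← Finset.sum_add_distrib]
  refine Finset.sum_congr rfl fun i _ => Finset.sum_congr rfl fun j _ => ?_
  rcases lt_trichotomy i j with h | h | h
  · rw [if_neg h.not_gt, if_pos h, hs i j]; ring
  · subst h
    have h0 : (B i i : ℝ) = 0 := by linarith [hs i i]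
    simp [h0]
  · rw [if_pos h, if_neg h.not_gt]; ring

/-- for every map `τ : 𝕋ⁿ → 𝕋` (in particular every smooth one), all
`m, m' ∈ ℤⁿ` and `a, a', a'' ∈ ℝⁿ`, the crossed-intertwiner axioms for
`F_B = (id, f_B, η_B) : TBFFR[n] → TBFFR[n]` hold pointwise: (CI2)
`⌊m'|B|m⌋ ≡ 0 mod ℤ`; (CI4)
`η_B(a, m−a) + f_B(α(a,(τ,m))) = η_B(m−a, a) + α(a, f_B(τ,m))`; (CI5)
`η_B(a,a') + η_B(a+a',a'') = η_B(a',a'') + η_B(a, a'+a'')`. Moreover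
`f_{B₂} ∘ f_{B₁} = f_{B₁+B₂}` and `η_{B₂} + η_{B₁} = η_{B₁+B₂}`, so
`F_{B₂} ∘ F_{B₁} = F_{B₁+B₂}` and `B ↦ F_B` is an action of `𝔰𝔬(n,ℤ)` on
`TBFFR[n]` by crossed intertwiners. -/
theorem FB_crossed_intertwiner_action (n : ℕ) (hn : 1 ≤ n)
    (B B₁ B₂ : Matrix (Fin n) (Fin n) ℤ)
    (hB : Bᵀ = -B) (hB₁ : B₁ᵀ = -B₁) (hB₂ : B₂ᵀ = -B₂) :
    (∀ m m' : Fin n → ℤ,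
        ηB B (fun i => (m i : ℝ)) (fun i => (m' i : ℝ)) = 0) ∧
    (∀ (τ : (Fin n → Torus) → Torus) (m : Fin n → ℤ) (a : Fin n → ℝ),
        ηB B a (TBt ((τ, m) : TBH n) - a) + fB B (TBα a (τ, m)) =
          ηB B (TBt ((τ, m) : TBH n) - a) a + TBα a (fB B (τ, m))) ∧
    (∀ a a' a'' : Fin n → ℝ,
        ηB B a a' + ηB B (a + a') a'' = ηB B a' a'' + ηB B a (a' + a'')) ∧
    (∀ h : TBH n, fB B₂ (fB B₁ h) = fB (B₁ + B₂) h) ∧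
    (∀ a a' : Fin n → ℝ, ηB B₂ a a' + ηB B₁ a a' = ηB (B₁ + B₂) a a') := by
  refine ⟨fun m m' => ?_, fun τ m a => ?_, fun a a' a'' => ?_, fun h => ?_, fun a a' => ?_⟩
  · refine Prod.ext (funext fun c => ?_) rfl
    exact lbrak_int B m' m
  · refine Prod.ext (funext fun c => ?_) rfl
    change ((lbrak B (TBt ((τ, m) : TBH n) - a) a : ℝ) : Torus) +
        (τ (c - fun i => ((a i : ℝ) : Torus)) - braB B m c) =
      ((lbrak B a (TBt ((τ, m) : TBH n) - a) : ℝ) : Torus) +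
        (τ (c - fun i => ((a i : ℝ) : Torus)) - braB B m (c - fun i => ((a i : ℝ) : Torus)))
    rw [lbrak_skew B hB, braB_sub, braB_coe, AddCircle.coe_add]
    have h : (∑ i, ∑ j, (B i j : ℝ) * (TBt ((τ, m) : TBH n) - a) i * a j) =
        ∑ i, ∑ j, (B i j : ℝ) * (m i : ℝ) * a j := by
      have h0 : (∑ i, ∑ j, (B i j : ℝ) * a i * a j) = 0 := by
        linarith [lbrak_skew B hB a a]
      rw [← sub_zero (∑ i, ∑ j, (B i j : ℝ) * (m i : ℝ) * a j), ← h0]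
      simp only [← Finset.sum_sub_distrib, TBt, Pi.sub_apply]
      refine Finset.sum_congr rfl fun i _ => Finset.sum_congr rfl fun j _ => ?_
      ring
    rw [h]
    abel
  · refine Prod.ext (funext fun c => ?_) (by simp [ηB])
    change ((lbrak B a' a : ℝ) : Torus) + ((lbrak B a'' (a + a') : ℝ) : Torus) =
      ((lbrak B a'' a' : ℝ) : Torus) + ((lbrak B (a' + a'') a : ℝ) : Torus)
    rw [lbrak_add_left, lbrak_add_right, AddCircle.coe_add, AddCircle.coe_add]
    abel
  · refine Prod.ext (funext fun c => ?_) rfl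
    change h.1 c - braB B₁ h.2 c - braB B₂ h.2 c = h.1 c - braB (B₁ + B₂) h.2 c
    rw [braB_add_matrix]
    abel
  · refine Prod.ext (funext fun c => ?_) (by simp [ηB])
    change ((lbrak B₂ a' a : ℝ) : Torus) + ((lbrak B₁ a' a : ℝ) : Torus) =
      ((lbrak (B₁ + B₂) a' a : ℝ) : Torus)
    rw [lbrak_add_matrix, AddCircle.coe_add]
    abel
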